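/- (Theorem "stayinggraphicalthm", graphical case: graphs staying graphical keep bounded gradient and controlled height on shrinking balls.) Let n ≥ 1. For every L ≥ 1 there exists Λ > 1 such that the following holds. Let ρ, Γ, τ > 0, δ ∈ (0,1], t₀ ∈ ℝ, â ∈ ℝⁿ, and let f : [t₀,t₀+τ) × Bⁿ(â,ρ) → ℝ be a graphical mean curvature flow with |f(t,x)| < Γ for all (t,x). Suppose sup_{Bⁿ(â,ρ)} |f(t₀,·)| ≤ Γ − 2δρ and sup_{Bⁿ(â,ρ)} |Df(t₀,·)| ≤ L. Then for every t ∈ (t₀,t₀+τ) with Λ√(t−t₀) < δρ and every x ∈ Bⁿ(â, ρ − Λ√(t−t₀)) one has |f(t,x)| ≤ sup_{Bⁿ(â,ρ)} |f(t₀,·)| + Λ√(t−t₀) and |Df(t,x)| ≤ 4L. -/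

import Mathlib

open Metric Set MeasureTheory

/-- Partial derivative `∂ᵢ g (x)`. -/
noncomputable def pd {n : ℕ} (g : EuclideanSpace ℝ (Fin n) → ℝ) (x : EuclideanSpace ℝ (Fin n))
    (i : Fin n) : ℝ :=
  fderiv ℝ g x (EuclideanSpace.single i 1)

/-- Second partial derivative `∂ᵢ∂ⱼ g (x)`. -/
noncomputable def pd2 {n : ℕ} (g : EuclideanSpace ℝ (Fin n) → ℝ) (x : EuclideanSpace ℝ (Fin n))
    (i j : Fin n) : ℝ :=
  fderiv ℝ (fun y => pd g y j) x (EuclideanSpace.single i 1)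

/-- Squared Euclidean norm `|Dg(x)|²` of the spatial gradient. -/
noncomputable def gradNormSq {n : ℕ} (g : EuclideanSpace ℝ (Fin n) → ℝ)
    (x : EuclideanSpace ℝ (Fin n)) : ℝ :=
  ∑ i, (pd g x i) ^ 2

/-- Euclidean norm `|Dg(x)|` of the spatial gradient. -/
noncomputable def gradNorm {n : ℕ} (g : EuclideanSpace ℝ (Fin n) → ℝ)
    (x : EuclideanSpace ℝ (Fin n)) : ℝ :=
  Real.sqrt (gradNormSq g x)

/-- Frobenius norm `|D²g(x)|` of the spatial Hessian. -/
noncomputable def hessNorm {n : ℕ} (g : EuclideanSpace ℝ (Fin n) → ℝ)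
    (x : EuclideanSpace ℝ (Fin n)) : ℝ :=
  Real.sqrt (∑ i, ∑ j, (pd2 g x i j) ^ 2)

/-- Right-hand side of the graphical mean curvature flow equation:
`∑ᵢⱼ (δᵢⱼ − ∂ᵢg ∂ⱼg / (1+|Dg|²)) ∂ᵢ∂ⱼ g`. -/
noncomputable def mcfRHS {n : ℕ} (g : EuclideanSpace ℝ (Fin n) → ℝ)
    (x : EuclideanSpace ℝ (Fin n)) : ℝ :=
  ∑ i, ∑ j,
    ((if i = j then (1 : ℝ) else 0) - pd g x i * pd g x j / (1 + gradNormSq g x)) * pd2 g x i j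

/-- `f` is a (smooth) graphical mean curvature flow on `I × U`. -/
def IsGMCF {n : ℕ} (I : Set ℝ) (U : Set (EuclideanSpace ℝ (Fin n)))
    (f : ℝ → EuclideanSpace ℝ (Fin n) → ℝ) : Prop :=
  ContDiffOn ℝ (⊤ : ℕ∞) (fun p : ℝ × EuclideanSpace ℝ (Fin n) => f p.1 p.2) (I ×ˢ U) ∧
  ∀ t ∈ I, ∀ x ∈ U, deriv (fun s => f s x) t = mcfRHS (f t) x

/-- Squared norm `|A|²(g,x)` of the second fundamental form of the graph of `g`
at `(x, g(x))`. -/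
noncomputable def secondFF2 {n : ℕ} (g : EuclideanSpace ℝ (Fin n) → ℝ)
    (x : EuclideanSpace ℝ (Fin n)) : ℝ :=
  ∑ i, ∑ j, ∑ k, ∑ l,
    ((if i = k then (1 : ℝ) else 0) - pd g x i * pd g x k / (1 + gradNormSq g x)) *
      ((if j = l then (1 : ℝ) else 0) - pd g x j * pd g x l / (1 + gradNormSq g x)) *
      (pd2 g x i j / Real.sqrt (1 + gradNormSq g x)) *
      (pd2 g x k l / Real.sqrt (1 + gradNormSq g x))

/-!
Let `v = √(1 + |Df|²)` and `X = (x, f(t, x))`. Along the flow the angle function `1 / v` is a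
supersolution of the operator `∂ₜ - g^{ij} ∂ᵢ∂ⱼ` of the graph, because `|Dv|` is controlled by the
Hessian of `f`, and for `c > 2 n` so is `|X - X₀|² + c (t - t₀)`, strictly. Hence so is
`|X - X₀|² + c (t - t₀) + κ / v` for `κ ≥ 0`. If it is at least `R²` initially over a ball of radius
`R` about `x₀`, then, being at least `R²` on the lateral boundary anyway, it stays so by the weak
minimum principle.

Choosing `κ = R² sup v(t₀, ·)` makes the initial inequality trivial, and evaluating at `X = X₀`
bounds `v` at the centre at a later time. Choosing `κ = 0` says that `f` avoids a shrinking sphere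
which it does not enter initially; since the height depends continuously on time, it cannot jump
past the sphere, which bounds the growth of `|f|` at the centre.
-/

section

open Filter
open scoped Topology Matrix ContDiff

section DirectionalDerivative

variable {X : Type*} [NormedAddCommGroup X] [NormedSpace ℝ X]
  {F G : X → ℝ} {v w p : X} {s : Set X}

/-- The derivative of a scalar function in the direction `v`, as a function of the base point. -/
noncomputable def dirDeriv (v : X) (F : X → ℝ) (p : X) : ℝ :=
  fderiv ℝ F p v

theorem contDiffAt_dirDeriv {k m : WithTop ℕ∞} (hF : ContDiffAt ℝ k F p) (hk : m + 1 ≤ k) (v : X) :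
    ContDiffAt ℝ m (dirDeriv v F) p :=
  (hF.fderiv_right hk).clm_apply contDiffAt_const

theorem dirDeriv_congr (h : F =ᶠ[𝓝 p] G) (v : X) : dirDeriv v F =ᶠ[𝓝 p] dirDeriv v G :=
  (h.fderiv (𝕜 := ℝ)).mono fun _ hq => by simp only [dirDeriv, hq]

theorem dirDeriv_add (hF : DifferentiableAt ℝ F p) (hG : DifferentiableAt ℝ G p) :
    dirDeriv v (fun q => F q + G q) p = dirDeriv v F p + dirDeriv v G p := by
  simp only [dirDeriv, fderiv_fun_add hF hG, add_apply]

theorem dirDeriv_mul (hF : DifferentiableAt ℝ F p) (hG : DifferentiableAt ℝ G p) :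
    dirDeriv v (fun q => F q * G q) p = dirDeriv v F p * G p + F p * dirDeriv v G p := by
  simp only [dirDeriv, fderiv_fun_mul hF hG, add_apply, smul_apply, smul_eq_mul]
  ring

theorem dirDeriv_sum {ι : Type*} {A : ι → X → ℝ} (t : Finset ι)
    (hA : ∀ i ∈ t, DifferentiableAt ℝ (A i) p) :
    dirDeriv v (fun q => ∑ i ∈ t, A i q) p = ∑ i ∈ t, dirDeriv v (A i) p := by
  simp only [dirDeriv, fderiv_fun_sum hA, sum_apply]

theorem dirDeriv_comp {ψ : ℝ → ℝ} {ψ' : ℝ} (hψ : HasDerivAt ψ ψ' (F p))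
    (hF : DifferentiableAt ℝ F p) : dirDeriv v (ψ ∘ F) p = ψ' * dirDeriv v F p := by
  simp only [dirDeriv, (hψ.comp_hasFDerivAt p hF.hasFDerivAt).fderiv,
    smul_apply, smul_eq_mul]

theorem dirDeriv_dirDeriv (hF : ContDiffAt ℝ 2 F p) :
    dirDeriv v (dirDeriv w F) p = fderiv ℝ (fderiv ℝ F) p v w := by
  have hF' : DifferentiableAt ℝ (fderiv ℝ F) p :=
    (hF.fderiv_right (m := 1) (by norm_num)).differentiableAt (by norm_num)
  have hw : dirDeriv w F = fun q => fderiv ℝ F q w := rfl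
  simp [dirDeriv, hw, fderiv_clm_apply hF' (differentiableAt_const w)]

theorem dirDeriv_comm (hF : ContDiffAt ℝ 2 F p) (v w : X) :
    dirDeriv v (dirDeriv w F) p = dirDeriv w (dirDeriv v F) p := by
  rw [dirDeriv_dirDeriv hF, dirDeriv_dirDeriv hF]
  exact hF.isSymmSndFDerivAt (by simp) v w

theorem hasDerivAt_comp_line {r : ℝ} (hF : DifferentiableAt ℝ F (p + r • v)) :
    HasDerivAt (fun r : ℝ => F (p + r • v)) (dirDeriv v F (p + r • v)) r := by
  have hline : HasDerivAt (fun r : ℝ => p + r • v) v r := by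
    simpa using ((hasDerivAt_id r).smul_const v).const_add p
  exact hF.hasFDerivAt.comp_hasDerivAt r hline

theorem second_deriv_nonneg_of_isLocalMin {φ φ' : ℝ → ℝ} {φ'' r : ℝ} (hmin : IsLocalMin φ r)
    (hφ : ∀ᶠ s in 𝓝 r, HasDerivAt φ (φ' s) s) (hφ' : HasDerivAt φ' φ'' r) : 0 ≤ φ'' := by
  have hderiv : deriv φ =ᶠ[𝓝 r] φ' := hφ.mono fun _ hs => hs.deriv
  have hsnd : deriv (deriv φ) r = φ'' := hderiv.deriv_eq.trans hφ'.deriv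
  by_contra! hneg
  have hmax : IsLocalMax φ r := isLocalMax_of_deriv_deriv_neg (hsnd ▸ hneg)
    hmin.deriv_eq_zero hφ.self_of_nhds.continuousAt
  have hconst : φ =ᶠ[𝓝 r] fun _ => φ r := (hmin.and hmax).mono fun _ hs => le_antisymm hs.2 hs.1
  have : deriv (deriv φ) r = 0 := by
    rw [hconst.deriv.deriv_eq]; simp
  linarith

theorem dirDeriv_dirDeriv_nonneg_of_isLocalMinOn (hF : ContDiffAt ℝ 2 F p)
    (hmin : IsLocalMinOn F s p) (hline : ∀ r : ℝ, p + r • v ∈ s) :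
    0 ≤ dirDeriv v (dirDeriv v F) p := by
  have hp : p + (0 : ℝ) • v = p := by simp
  have hcont : Tendsto (fun r : ℝ => p + r • v) (𝓝 0) (𝓝 p) := by
    have : Continuous fun r : ℝ => p + r • v := by fun_prop
    simpa using this.tendsto 0
  have hmin' : IsLocalMin (fun r : ℝ => F (p + r • v)) 0 := by
    have hwithin := tendsto_nhdsWithin_of_tendsto_nhds_of_eventually_within _ hcont
      (Eventually.of_forall hline)
    simpa [IsLocalMin, IsMinFilter] using hwithin.eventually hmin
  refine second_deriv_nonneg_of_isLocalMin hmin'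
    (φ' := fun r : ℝ => dirDeriv v F (p + r • v)) ?_ ?_
  · filter_upwards [hcont.eventually (hF.eventually (by simp))] with r hr
    exact hasDerivAt_comp_line (hr.differentiableAt (by norm_num))
  · have hF' := (contDiffAt_dirDeriv (m := 1) hF (by norm_num) v).differentiableAt (by norm_num)
    have h := hasDerivAt_comp_line (F := dirDeriv v F) (v := v) (r := 0) (by rwa [hp])
    rwa [hp] at h

theorem dirDeriv_nonneg_of_isLocalMinOn (hF : DifferentiableAt ℝ F p) (hmin : IsLocalMinOn F s p)
    (hseg : segment ℝ p (p + v) ⊆ s) : 0 ≤ dirDeriv v F p :=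
  hmin.hasFDerivWithinAt_nonneg hF.hasFDerivAt.hasFDerivWithinAt
    (mem_posTangentConeAt_of_segment_subset hseg)

end DirectionalDerivative

section PosSemidef

variable {ι : Type*} [Fintype ι] {A B : Matrix ι ι ℝ}

theorem exists_transpose_mul_self_of_posSemidef (hA : A.PosSemidef) :
    ∃ C : Matrix ι ι ℝ, A = Cᵀ * C := by
  classical
  open scoped MatrixOrder in
  exact CStarAlgebra.nonneg_iff_eq_star_mul_self.mp hA.nonneg

theorem trace_mul_nonneg_of_posSemidef (hA : A.PosSemidef) (hB : B.PosSemidef) :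
    0 ≤ (A * B).trace := by
  obtain ⟨C, rfl⟩ := exists_transpose_mul_self_of_posSemidef hA
  rw [Matrix.mul_assoc, Matrix.trace_mul_comm]
  exact (hB.mul_mul_conjTranspose_same C).trace_nonneg

theorem trace_mul_vecMulVec (A : Matrix ι ι ℝ) (x y : ι → ℝ) :
    (A * Matrix.vecMulVec x y).trace = y ⬝ᵥ A *ᵥ x := by
  rw [Matrix.mul_vecMulVec, Matrix.trace_vecMulVec, dotProduct_comm]

theorem trace_mul_mul_transpose (A B : Matrix ι ι ℝ) :
    (B * A * Bᵀ).trace = ∑ k, B k ⬝ᵥ A *ᵥ B k := by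
  rw [Matrix.mul_assoc]
  rfl

theorem posSemidef_smul_one_sub_vecMulVec [DecidableEq ι] (x : ι → ℝ) :
    ((x ⬝ᵥ x) • (1 : Matrix ι ι ℝ) - Matrix.vecMulVec x x).PosSemidef := by
  refine Matrix.PosSemidef.of_dotProduct_mulVec_nonneg ?_ fun y => ?_
  · ext i j
    simp [Matrix.one_apply, Matrix.vecMulVec_apply, mul_comm, eq_comm]
  · have hcs : (x ⬝ᵥ y) ^ 2 ≤ (x ⬝ᵥ x) * (y ⬝ᵥ y) := by
      simpa only [dotProduct, sq] using Finset.sum_mul_sq_le_sq_mul_sq Finset.univ x y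
    simp only [star_trivial, Matrix.sub_mulVec, Matrix.smul_mulVec, Matrix.one_mulVec,
      Matrix.vecMulVec_mulVec, dotProduct_sub, dotProduct_smul, smul_eq_mul,
      op_smul_eq_mul, dotProduct_comm y x]
    linarith

theorem dotProduct_mulVec_le_trace_mul (hA : A.PosSemidef) (x : ι → ℝ) :
    x ⬝ᵥ A *ᵥ x ≤ A.trace * (x ⬝ᵥ x) := by
  classical
  have h := trace_mul_nonneg_of_posSemidef hA (posSemidef_smul_one_sub_vecMulVec x)
  rw [Matrix.mul_sub, Matrix.trace_sub, trace_mul_vecMulVec, Matrix.mul_smul, Matrix.mul_one,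
    Matrix.trace_smul, smul_eq_mul] at h
  linarith

end PosSemidef

section InverseMetric

variable {n : ℕ} (q : Fin n → ℝ)

/-- The inverse metric `g⁻¹ = I - q qᵀ / (1 + |q|²)` of a graph with gradient `q`, which is the
coefficient matrix of the graphical mean curvature flow equation. -/
noncomputable def graphInvMetric : Matrix (Fin n) (Fin n) ℝ :=
  1 - (1 + q ⬝ᵥ q)⁻¹ • Matrix.vecMulVec q q

theorem one_add_dotProduct_self_pos : 0 < 1 + q ⬝ᵥ q := by
  have : 0 ≤ q ⬝ᵥ q := by simpa using dotProduct_star_self_nonneg q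
  linarith

theorem graphInvMetric_apply (i j : Fin n) :
    graphInvMetric q i j = (if i = j then 1 else 0) - q i * q j / (1 + q ⬝ᵥ q) := by
  simp [graphInvMetric, Matrix.one_apply, Matrix.vecMulVec_apply, div_eq_inv_mul]

theorem posSemidef_graphInvMetric : (graphInvMetric q).PosSemidef := by
  have hQ := one_add_dotProduct_self_pos q
  have hdecomp : graphInvMetric q = (1 + q ⬝ᵥ q)⁻¹ •
      (1 + ((q ⬝ᵥ q) • (1 : Matrix (Fin n) (Fin n) ℝ) - Matrix.vecMulVec q q)) := by
    rw [← add_sub_assoc, ← one_smul ℝ (1 : Matrix (Fin n) (Fin n) ℝ), smul_smul, mul_one,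
      ← add_smul, smul_sub, smul_smul, inv_mul_cancel₀ hQ.ne', one_smul, graphInvMetric]
  rw [hdecomp]
  exact (Matrix.PosSemidef.one.add (posSemidef_smul_one_sub_vecMulVec q)).smul (inv_nonneg.2 hQ.le)

theorem graphInvMetric_mulVec (x : Fin n → ℝ) :
    graphInvMetric q *ᵥ x = x - ((q ⬝ᵥ x) / (1 + q ⬝ᵥ q)) • q := by
  ext i
  simp only [graphInvMetric, Matrix.sub_mulVec, Matrix.one_mulVec, Matrix.smul_mulVec,
    Matrix.vecMulVec_mulVec, op_smul_eq_smul, Pi.sub_apply, Pi.smul_apply, smul_eq_mul,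
    sub_right_inj]
  ring

theorem graphInvMetric_mulVec_self : graphInvMetric q *ᵥ q = (1 + q ⬝ᵥ q)⁻¹ • q := by
  have hQ := (one_add_dotProduct_self_pos q).ne'
  ext i
  simp only [graphInvMetric_mulVec, Pi.sub_apply, Pi.smul_apply, smul_eq_mul]
  field_simp
  ring

theorem trace_graphInvMetric_add :
    (graphInvMetric q).trace + q ⬝ᵥ graphInvMetric q *ᵥ q = n := by
  rw [graphInvMetric_mulVec_self]
  simp [graphInvMetric, Matrix.trace_vecMulVec]

end InverseMetric

section SpaceTime

variable {n : ℕ}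

/-- The space-time `ℝ × ℝⁿ` on which a flow of functions on `ℝⁿ` is viewed as one function. -/
abbrev SpaceTime (n : ℕ) : Type := ℝ × EuclideanSpace ℝ (Fin n)

/-- The unit vector in the time direction of space-time. -/
def timeDir : SpaceTime n := (1, 0)

/-- The `i`-th standard unit vector in the spatial directions of space-time. -/
noncomputable def spaceDir (i : Fin n) : SpaceTime n := (0, EuclideanSpace.single i 1)

/-- The spatial gradient of a function on space-time. -/
noncomputable def spaceGrad (u : SpaceTime n → ℝ) (p : SpaceTime n) (i : Fin n) : ℝ :=
  dirDeriv (spaceDir i) u p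

/-- The spatial Hessian of a function on space-time. -/
noncomputable def spaceHess (u : SpaceTime n → ℝ) (p : SpaceTime n) : Matrix (Fin n) (Fin n) ℝ :=
  Matrix.of fun i j => dirDeriv (spaceDir i) (dirDeriv (spaceDir j) u) p

/-- The parabolic operator `∂ₜ u - tr (a D²u)` with coefficient matrix `a`, evaluated at the
single point `p`, so that `a` need not be given as a function of the point. -/
noncomputable def parabolicOp (a : Matrix (Fin n) (Fin n) ℝ) (u : SpaceTime n → ℝ)
    (p : SpaceTime n) : ℝ :=
  dirDeriv timeDir u p - (a * spaceHess u p).trace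

variable {a : Matrix (Fin n) (Fin n) ℝ} {u v : SpaceTime n → ℝ} {p : SpaceTime n}

theorem isSymm_spaceHess (hu : ContDiffAt ℝ 2 u p) : (spaceHess u p).IsSymm :=
  Matrix.IsSymm.ext fun i j => dirDeriv_comm hu (spaceDir j) (spaceDir i)

theorem parabolicOp_congr (h : u =ᶠ[𝓝 p] v) : parabolicOp a u p = parabolicOp a v p := by
  have hhess : spaceHess u p = spaceHess v p := Matrix.ext fun i j =>
    (dirDeriv_congr (dirDeriv_congr h (spaceDir j)) (spaceDir i)).eq_of_nhds
  rw [parabolicOp, parabolicOp, hhess, (dirDeriv_congr h timeDir).eq_of_nhds]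

theorem spaceHess_add (hu : ContDiffAt ℝ 2 u p) (hv : ContDiffAt ℝ 2 v p) :
    spaceHess (fun q => u q + v q) p = spaceHess u p + spaceHess v p := by
  ext i j
  have hfirst : dirDeriv (spaceDir j) (fun q => u q + v q) =ᶠ[𝓝 p]
      fun q => dirDeriv (spaceDir j) u q + dirDeriv (spaceDir j) v q := by
    filter_upwards [hu.eventually (by simp), hv.eventually (by simp)] with q huq hvq
    exact dirDeriv_add (huq.differentiableAt (by simp)) (hvq.differentiableAt (by simp))
  simp only [spaceHess, Matrix.of_apply, Matrix.add_apply]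
  rw [(dirDeriv_congr hfirst _).eq_of_nhds,
    dirDeriv_add ((contDiffAt_dirDeriv (m := 1) hu le_rfl _).differentiableAt one_ne_zero)
      ((contDiffAt_dirDeriv (m := 1) hv le_rfl _).differentiableAt one_ne_zero)]

theorem parabolicOp_add (hu : ContDiffAt ℝ 2 u p) (hv : ContDiffAt ℝ 2 v p) :
    parabolicOp a (fun q => u q + v q) p = parabolicOp a u p + parabolicOp a v p := by
  rw [parabolicOp, spaceHess_add hu hv, mul_add, Matrix.trace_add,
    dirDeriv_add (hu.differentiableAt two_ne_zero) (hv.differentiableAt two_ne_zero),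
    parabolicOp, parabolicOp]
  ring

theorem parabolicOp_const (c : ℝ) : parabolicOp a (fun _ => c) p = 0 := by
  have hzero (w : SpaceTime n) (c : ℝ) : dirDeriv w (fun _ => c) = fun _ => 0 :=
    funext fun q => by simp [dirDeriv]
  have hhess : spaceHess (fun _ : SpaceTime n => c) p = 0 := by
    ext i j; simp [spaceHess, hzero]
  simp [parabolicOp, hhess, hzero]

theorem parabolicOp_sub_const (hu : ContDiffAt ℝ 2 u p) (c : ℝ) :
    parabolicOp a (fun q => u q - c) p = parabolicOp a u p := by
  simpa only [sub_eq_add_neg, parabolicOp_const, add_zero] using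
    parabolicOp_add (a := a) hu (contDiffAt_const (c := -c))

theorem parabolicOp_continuousLinearMap (ℓ : SpaceTime n →L[ℝ] ℝ) :
    parabolicOp a ℓ p = ℓ timeDir := by
  have hderiv (w : SpaceTime n) : dirDeriv w ℓ = fun _ => ℓ w :=
    funext fun q => by rw [dirDeriv, ℓ.fderiv]
  have hhess : spaceHess ℓ p = 0 := by
    ext i j; simp [spaceHess, hderiv, dirDeriv]
  rw [parabolicOp, hhess, hderiv, mul_zero, Matrix.trace_zero, sub_zero]

theorem parabolicOp_sum {ι : Type*} (s : Finset ι) {w : ι → SpaceTime n → ℝ}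
    (hw : ∀ k ∈ s, ContDiffAt ℝ 2 (w k) p) :
    parabolicOp a (fun q => ∑ k ∈ s, w k q) p = ∑ k ∈ s, parabolicOp a (w k) p := by
  classical
  induction s using Finset.induction_on with
  | empty => simpa using parabolicOp_const 0
  | insert k s hk ih =>
    rw [Finset.forall_mem_insert] at hw
    simp only [Finset.sum_insert hk]
    rw [parabolicOp_add hw.1 (ContDiffAt.sum hw.2), ih hw.2]

section ChainRule

variable {ψ ψ' : ℝ → ℝ} {ψ'' : ℝ}

theorem spaceHess_comp (hu : ContDiffAt ℝ 2 u p)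
    (hψ : ∀ᶠ s in 𝓝 (u p), HasDerivAt ψ (ψ' s) s) (hψ' : HasDerivAt ψ' ψ'' (u p)) :
    spaceHess (ψ ∘ u) p =
      ψ' (u p) • spaceHess u p + ψ'' • Matrix.vecMulVec (spaceGrad u p) (spaceGrad u p) := by
  ext i j
  have hfirst : dirDeriv (spaceDir j) (ψ ∘ u) =ᶠ[𝓝 p]
      fun q => (ψ' ∘ u) q * dirDeriv (spaceDir j) u q := by
    filter_upwards [hu.eventually (by simp), hu.continuousAt.eventually hψ] with q huq hψq
    exact dirDeriv_comp hψq (huq.differentiableAt two_ne_zero)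
  have hdu := hu.differentiableAt two_ne_zero
  simp only [spaceHess, Matrix.of_apply, Matrix.add_apply, Matrix.smul_apply, smul_eq_mul,
    Matrix.vecMulVec_apply, spaceGrad]
  rw [(dirDeriv_congr hfirst _).eq_of_nhds,
    dirDeriv_mul (hψ'.differentiableAt.comp p hdu)
      ((contDiffAt_dirDeriv (m := 1) hu le_rfl _).differentiableAt one_ne_zero),
    dirDeriv_comp hψ' hdu, Function.comp_apply]
  ring

theorem parabolicOp_comp (hu : ContDiffAt ℝ 2 u p)
    (hψ : ∀ᶠ s in 𝓝 (u p), HasDerivAt ψ (ψ' s) s) (hψ' : HasDerivAt ψ' ψ'' (u p)) :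
    parabolicOp a (ψ ∘ u) p =
      ψ' (u p) * parabolicOp a u p - ψ'' * (spaceGrad u p ⬝ᵥ a *ᵥ spaceGrad u p) := by
  rw [parabolicOp, parabolicOp, spaceHess_comp hu hψ hψ',
    dirDeriv_comp hψ.self_of_nhds (hu.differentiableAt two_ne_zero), mul_add, Matrix.trace_add,
    Matrix.mul_smul, Matrix.mul_smul, Matrix.trace_smul, Matrix.trace_smul, trace_mul_vecMulVec]
  simp only [smul_eq_mul]
  ring

theorem parabolicOp_const_mul (hu : ContDiffAt ℝ 2 u p) (c : ℝ) :
    parabolicOp a (fun q => c * u q) p = c * parabolicOp a u p := by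
  have h := parabolicOp_comp (a := a) hu (ψ := fun s => c * s) (ψ' := fun _ => c) (ψ'' := 0)
    (Eventually.of_forall fun s => by simpa using (hasDerivAt_id s).const_mul c)
    (hasDerivAt_const _ _)
  simpa only [zero_mul, sub_zero] using! h

theorem parabolicOp_sub_const_sq (hu : ContDiffAt ℝ 2 u p) (h : ℝ) :
    parabolicOp a (fun q => (u q - h) ^ 2) p =
      2 * (u p - h) * parabolicOp a u p - 2 * (spaceGrad u p ⬝ᵥ a *ᵥ spaceGrad u p) := by
  refine parabolicOp_comp (a := a) hu (ψ := fun s => (s - h) ^ 2) (ψ' := fun s => 2 * (s - h))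
    (Eventually.of_forall fun s => ?_) ?_
  · simpa using! ((hasDerivAt_id s).sub_const h).fun_pow 2
  · simpa using ((hasDerivAt_id (u p)).sub_const h).const_mul 2

end ChainRule

section MinimumPrinciple

theorem dotProduct_spaceHess_mulVec (hu : ContDiffAt ℝ 2 u p) (x : Fin n → ℝ) :
    x ⬝ᵥ spaceHess u p *ᵥ x =
      dirDeriv (0, WithLp.toLp 2 x) (dirDeriv (0, WithLp.toLp 2 x) u) p := by
  have hx : ((0, WithLp.toLp 2 x) : SpaceTime n) = ∑ i, x i • spaceDir i := by
    refine Prod.ext (by simp [spaceDir, Prod.fst_sum]) ?_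
    ext j
    simp [spaceDir, Prod.snd_sum, Pi.single_apply]
  simp only [dirDeriv_dirDeriv hu, spaceHess, Matrix.of_apply, dotProduct, Matrix.mulVec, hx,
    map_sum, map_smul, sum_apply, smul_apply, smul_eq_mul, Finset.mul_sum]
  rw [Finset.sum_comm]
  exact Finset.sum_congr rfl fun i _ => Finset.sum_congr rfl fun j _ => by ring

theorem posSemidef_spaceHess_of_isLocalMinOn (hu : ContDiffAt ℝ 2 u p)
    (hmin : IsLocalMinOn u (Iic p.1 ×ˢ univ) p) : (spaceHess u p).PosSemidef := by
  refine Matrix.PosSemidef.of_dotProduct_mulVec_nonneg (isSymm_spaceHess hu) fun x => ?_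
  rw [star_trivial, dotProduct_spaceHess_mulVec hu]
  exact dirDeriv_dirDeriv_nonneg_of_isLocalMinOn hu hmin fun r => by simp

theorem dirDeriv_timeDir_nonpos_of_isLocalMinOn (hu : DifferentiableAt ℝ u p)
    (hmin : IsLocalMinOn u (Iic p.1 ×ˢ univ) p) : dirDeriv timeDir u p ≤ 0 := by
  have hseg : segment ℝ p (p + -timeDir) ⊆ Iic p.1 ×ˢ univ :=
    ((convex_Iic p.1).prod convex_univ).segment_subset (by simp) (by simp [timeDir])
  simpa [dirDeriv] using dirDeriv_nonneg_of_isLocalMinOn hu hmin hseg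

theorem parabolicOp_nonpos_of_isLocalMinOn (ha : a.PosSemidef) (hu : ContDiffAt ℝ 2 u p)
    (hmin : IsLocalMinOn u (Iic p.1 ×ˢ univ) p) : parabolicOp a u p ≤ 0 :=
  sub_nonpos_of_le <|
    (dirDeriv_timeDir_nonpos_of_isLocalMinOn (hu.differentiableAt two_ne_zero) hmin).trans
      (trace_mul_nonneg_of_posSemidef ha (posSemidef_spaceHess_of_isLocalMinOn hu hmin))

theorem le_of_parabolicOp_pos {t₀ t₁ m : ℝ} {K : Set (EuclideanSpace ℝ (Fin n))}
    (hK : IsCompact K) (hcont : ContinuousOn u (Icc t₀ t₁ ×ˢ K))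
    (hbottom : ∀ x ∈ K, m ≤ u (t₀, x)) (hside : ∀ t ∈ Icc t₀ t₁, ∀ x ∈ frontier K, m ≤ u (t, x))
    (hpos : ∀ p ∈ Ioc t₀ t₁ ×ˢ interior K,
      ContDiffAt ℝ 2 u p ∧ ∃ a : Matrix (Fin n) (Fin n) ℝ, a.PosSemidef ∧ 0 < parabolicOp a u p)
    {p : SpaceTime n} (hp : p ∈ Icc t₀ t₁ ×ˢ K) : m ≤ u p := by
  obtain ⟨⟨t, x⟩, ⟨ht, hx⟩, hmin⟩ := (isCompact_Icc.prod hK).exists_isMinOn ⟨p, hp⟩ hcont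
  refine le_trans ?_ (hmin hp)
  rcases ht.1.eq_or_lt with rfl | ht₀
  · exact hbottom x hx
  by_cases hxK : x ∈ interior K
  · obtain ⟨hu, a, ha, hpos⟩ := hpos (t, x) ⟨⟨ht₀, ht.2⟩, hxK⟩
    have hnhds : Icc t₀ t₁ ×ˢ K ∈ 𝓝[Iic t ×ˢ univ] (t, x) := by
      rw [nhdsWithin_prod_eq, nhdsWithin_univ]
      exact prod_mem_prod (mem_of_superset (Icc_mem_nhdsLE ht₀) (Icc_subset_Icc_right ht.2))
        (mem_interior_iff_mem_nhds.1 hxK)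
    exact absurd (parabolicOp_nonpos_of_isLocalMinOn ha hu (mem_of_superset hnhds hmin)) hpos.not_ge
  · exact hside t ht x ⟨subset_closure hx, hxK⟩

end MinimumPrinciple

end SpaceTime

section AngleFunction

variable {n : ℕ} {u F : SpaceTime n → ℝ} {p : SpaceTime n}

theorem parabolicOp_dirDeriv {A : SpaceTime n → Matrix (Fin n) (Fin n) ℝ}
    (hu : ContDiffAt ℝ 3 u p) (hA : ∀ i j, DifferentiableAt ℝ (fun q => A q i j) p)
    (heq : ∀ᶠ q in 𝓝 p, parabolicOp (A q) u q = 0) (v : SpaceTime n) :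
    parabolicOp (A p) (dirDeriv v u) p =
      (Matrix.of (fun i j => dirDeriv v (fun q => A q i j) p) * spaceHess u p).trace := by
  have hu₂ : ContDiffAt ℝ 2 u p := hu.of_le (by norm_num)
  have hdu (w : SpaceTime n) : ContDiffAt ℝ 2 (dirDeriv w u) p := contDiffAt_dirDeriv hu le_rfl w
  have hcomm (w : SpaceTime n) : dirDeriv v (dirDeriv w u) =ᶠ[𝓝 p] dirDeriv w (dirDeriv v u) :=
    (hu₂.eventually (by simp)).mono fun q hq => dirDeriv_comm hq v w
  have hhess (i j : Fin n) : DifferentiableAt ℝ (fun q => spaceHess u q i j) p :=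
    (contDiffAt_dirDeriv (m := 1) (hdu (spaceDir j)) le_rfl _).differentiableAt one_ne_zero
  have hdhess (i j : Fin n) :
      dirDeriv v (fun q => spaceHess u q i j) p = spaceHess (dirDeriv v u) p i j :=
    (dirDeriv_comm (hdu (spaceDir j)) v (spaceDir i)).trans
      (dirDeriv_congr (hcomm (spaceDir j)) (spaceDir i)).eq_of_nhds
  have hpde : dirDeriv timeDir u =ᶠ[𝓝 p] fun q => ∑ i, ∑ j, A q i j * spaceHess u q j i :=
    heq.mono fun q hq => by
      simpa only [Matrix.trace, Matrix.diag, Matrix.mul_apply] using sub_eq_zero.1 hq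
  have hterm (i j : Fin n) : DifferentiableAt ℝ (fun q => A q i j * spaceHess u q j i) p :=
    (hA i j).mul (hhess j i)
  rw [parabolicOp, ← (hcomm timeDir).eq_of_nhds, (dirDeriv_congr hpde v).eq_of_nhds,
    dirDeriv_sum _ fun i _ => .fun_sum fun j _ => hterm i j]
  simp only [dirDeriv_sum _ fun j _ => hterm _ j, dirDeriv_mul (hA _ _) (hhess _ _), hdhess,
    Matrix.trace, Matrix.diag, Matrix.mul_apply, Matrix.of_apply, Finset.sum_add_distrib,
    add_sub_cancel_right]

/-- The square `1 + |DF|²` of the area density of the graph of the time slices of `F`. -/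
noncomputable def graphDensitySq (F : SpaceTime n → ℝ) (p : SpaceTime n) : ℝ :=
  1 + spaceGrad F p ⬝ᵥ spaceGrad F p

theorem graphDensitySq_pos : 0 < graphDensitySq F p :=
  one_add_dotProduct_self_pos _

theorem contDiffAt_graphDensitySq {k m : WithTop ℕ∞} (hF : ContDiffAt ℝ k F p) (hk : m + 1 ≤ k) :
    ContDiffAt ℝ m (graphDensitySq F) p :=
  contDiffAt_const.add <| .sum fun _ _ =>
    (contDiffAt_dirDeriv hF hk _).mul (contDiffAt_dirDeriv hF hk _)

theorem spaceGrad_graphDensitySq (hF : ContDiffAt ℝ 2 F p) :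
    spaceGrad (graphDensitySq F) p = (2 : ℝ) • spaceHess F p *ᵥ spaceGrad F p := by
  ext k
  have hq (i : Fin n) : DifferentiableAt ℝ (dirDeriv (spaceDir i) F) p :=
    (contDiffAt_dirDeriv (m := 1) hF le_rfl _).differentiableAt one_ne_zero
  have hsum := dirDeriv_sum (v := spaceDir k) Finset.univ fun i _ => (hq i).fun_mul (hq i)
  calc spaceGrad (graphDensitySq F) p k
      = dirDeriv (spaceDir k) (fun q => ∑ i, dirDeriv (spaceDir i) F q * dirDeriv (spaceDir i) F q)
          p := congrArg (· (spaceDir k)) (fderiv_const_add (𝕜 := ℝ) (1 : ℝ))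
    _ = ((2 : ℝ) • spaceHess F p *ᵥ spaceGrad F p) k := by
        rw [hsum]
        simp only [dirDeriv_mul (hq _) (hq _), Pi.smul_apply, Matrix.mulVec, dotProduct,
          spaceHess, spaceGrad, Matrix.of_apply, smul_eq_mul, Finset.mul_sum]
        exact Finset.sum_congr rfl fun i _ => by ring

theorem differentiableAt_graphInvMetric_spaceGrad (hF : ContDiffAt ℝ 2 F p) (i j : Fin n) :
    DifferentiableAt ℝ (fun q => graphInvMetric (spaceGrad F q) i j) p := by
  have hq (i : Fin n) : DifferentiableAt ℝ (fun q => spaceGrad F q i) p :=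
    (contDiffAt_dirDeriv (m := 1) hF le_rfl _).differentiableAt one_ne_zero
  simp only [graphInvMetric_apply]
  have hQ := (contDiffAt_graphDensitySq (m := 1) hF le_rfl).differentiableAt one_ne_zero
  exact (((hq i).fun_mul (hq j)).mul (hQ.fun_inv graphDensitySq_pos.ne')).const_sub _

theorem dirDeriv_graphInvMetric_spaceGrad (hF : ContDiffAt ℝ 2 F p) (k : Fin n) :
    Matrix.of (fun i j => dirDeriv (spaceDir k) (fun q => graphInvMetric (spaceGrad F q) i j) p) =
      (2 * (spaceHess F p *ᵥ spaceGrad F p) k / graphDensitySq F p ^ 2) •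
          Matrix.vecMulVec (spaceGrad F p) (spaceGrad F p) -
        (graphDensitySq F p)⁻¹ • (Matrix.vecMulVec (spaceHess F p k) (spaceGrad F p) +
          Matrix.vecMulVec (spaceGrad F p) (spaceHess F p k)) := by
  ext i j
  have hq (i : Fin n) : DifferentiableAt ℝ (dirDeriv (spaceDir i) F) p :=
    (contDiffAt_dirDeriv (m := 1) hF le_rfl _).differentiableAt one_ne_zero
  have hQ : DifferentiableAt ℝ (graphDensitySq F) p :=
    (contDiffAt_graphDensitySq (m := 1) hF le_rfl).differentiableAt one_ne_zero
  have hinv : HasDerivAt (fun s : ℝ => -s⁻¹) ((graphDensitySq F p ^ 2)⁻¹) (graphDensitySq F p) := by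
    simpa using (hasDerivAt_inv graphDensitySq_pos.ne').fun_neg
  have hentry : (fun q => graphInvMetric (spaceGrad F q) i j) = fun q =>
      (dirDeriv (spaceDir i) F q * dirDeriv (spaceDir j) F q) *
        ((fun s : ℝ => -s⁻¹) ∘ graphDensitySq F) q + if i = j then 1 else 0 := by
    funext q
    rw [graphInvMetric_apply]
    simp only [spaceGrad, Function.comp_apply, graphDensitySq]
    ring
  have hdQ : dirDeriv (spaceDir k) (graphDensitySq F) p =
      2 * (spaceHess F p *ᵥ spaceGrad F p) k := congrFun (spaceGrad_graphDensitySq hF) k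
  simp only [Matrix.of_apply, hentry]
  rw [dirDeriv_add (((hq i).fun_mul (hq j)).fun_mul (hinv.differentiableAt.comp p hQ))
      (differentiableAt_const _), dirDeriv_mul ((hq i).fun_mul (hq j))
      (hinv.differentiableAt.comp p hQ), dirDeriv_mul (hq i) (hq j), dirDeriv_comp hinv hQ, hdQ]
  simp only [dirDeriv, Function.comp_apply, spaceHess, fderiv_fun_const, Pi.zero_apply, zero_apply,
    Matrix.sub_apply, Matrix.smul_apply, Matrix.vecMulVec_apply, spaceGrad, smul_eq_mul,
    Matrix.add_apply, Matrix.of_apply]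
  ring

/-- The operator `∂ₜ - g^{ij} ∂ᵢ∂ⱼ` of the graph of `F`; graphical mean curvature flow is the
equation `graphHeatOp F F = 0`. -/
noncomputable def graphHeatOp (F u : SpaceTime n → ℝ) (p : SpaceTime n) : ℝ :=
  parabolicOp (graphInvMetric (spaceGrad F p)) u p

theorem graphHeatOp_spaceGrad (hF : ContDiffAt ℝ 3 F p) (heq : ∀ᶠ q in 𝓝 p, graphHeatOp F F q = 0)
    (k : Fin n) :
    graphHeatOp F (fun q => spaceGrad F q k) p = -(2 / graphDensitySq F p) *
      (spaceHess F p *ᵥ graphInvMetric (spaceGrad F p) *ᵥ spaceHess F p *ᵥ spaceGrad F p) k := by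
  have hF₂ : ContDiffAt ℝ 2 F p := hF.of_le (by norm_num)
  have hrow (x : Fin n → ℝ) : spaceHess F p k ⬝ᵥ x = (spaceHess F p *ᵥ x) k := rfl
  have hsymm (x : Fin n → ℝ) : x ⬝ᵥ spaceHess F p *ᵥ spaceHess F p k =
      (spaceHess F p *ᵥ spaceHess F p *ᵥ x) k := by
    rw [Matrix.dotProduct_mulVec, ← Matrix.mulVec_transpose, (isSymm_spaceHess hF₂).eq,
      dotProduct_comm, hrow]
  refine (parabolicOp_dirDeriv hF (differentiableAt_graphInvMetric_spaceGrad hF₂) heq _).trans ?_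
  rw [dirDeriv_graphInvMetric_spaceGrad hF₂, Matrix.trace_mul_comm, mul_sub, Matrix.trace_sub,
    Matrix.mul_smul, Matrix.mul_smul, mul_add, Matrix.trace_smul, Matrix.trace_smul,
    Matrix.trace_add, trace_mul_vecMulVec, trace_mul_vecMulVec, trace_mul_vecMulVec, hsymm, hrow,
    graphInvMetric_mulVec, Matrix.mulVec_sub, Matrix.mulVec_smul, ← graphDensitySq]
  simp only [smul_eq_mul, Pi.sub_apply, Pi.smul_apply]
  ring

theorem graphHeatOp_graphDensitySq (hF : ContDiffAt ℝ 3 F p)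
    (heq : ∀ᶠ q in 𝓝 p, graphHeatOp F F q = 0) :
    graphHeatOp F (graphDensitySq F) p =
      -(4 / graphDensitySq F p) * (spaceGrad F p ⬝ᵥ
          (spaceHess F p * graphInvMetric (spaceGrad F p) * spaceHess F p) *ᵥ spaceGrad F p) -
        2 * (spaceHess F p * graphInvMetric (spaceGrad F p) * spaceHess F p).trace := by
  have hF₂ : ContDiffAt ℝ 2 F p := hF.of_le (by norm_num)
  have hq (k : Fin n) : ContDiffAt ℝ 2 (fun q => spaceGrad F q k) p :=
    contDiffAt_dirDeriv hF le_rfl _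
  have hsq (k : Fin n) : ContDiffAt ℝ 2 (fun q => (spaceGrad F q k - 0) ^ 2) p :=
    ((hq k).sub contDiffAt_const).pow 2
  have hQ : graphDensitySq F = fun q => ∑ k, (spaceGrad F q k - 0) ^ 2 + 1 := by
    funext q
    simp only [graphDensitySq, dotProduct, sub_zero, sq, add_comm]
  have hrow (k : Fin n) : spaceGrad (fun q => spaceGrad F q k) p = spaceHess F p k :=
    funext fun i => dirDeriv_comm hF₂ _ _
  calc graphHeatOp F (graphDensitySq F) p
      = ∑ k, graphHeatOp F (fun q => (spaceGrad F q k - 0) ^ 2) p := by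
        rw [hQ, graphHeatOp, parabolicOp_add (.sum fun k _ => hsq k) contDiffAt_const,
          parabolicOp_const, parabolicOp_sum _ fun k _ => hsq k, add_zero]
        rfl
    _ = ∑ k, (2 * spaceGrad F p k * graphHeatOp F (fun q => spaceGrad F q k) p -
          2 * (spaceHess F p k ⬝ᵥ graphInvMetric (spaceGrad F p) *ᵥ spaceHess F p k)) :=
        Finset.sum_congr rfl fun k _ => by
          rw [graphHeatOp, parabolicOp_sub_const_sq (hq k), hrow, sub_zero, graphHeatOp]
    _ = _ := by
        nth_rw 6 [← (isSymm_spaceHess hF₂).eq]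
        rw [Finset.sum_sub_distrib, ← Finset.mul_sum, ← trace_mul_mul_transpose, dotProduct,
          Finset.mul_sum]
        congr 1
        refine Finset.sum_congr rfl fun k _ => ?_
        rw [graphHeatOp_spaceGrad hF heq, Matrix.mulVec_mulVec, Matrix.mulVec_mulVec]
        ring

theorem graphHeatOp_graphDensitySq_le (hF : ContDiffAt ℝ 3 F p)
    (heq : ∀ᶠ q in 𝓝 p, graphHeatOp F F q = 0) :
    graphHeatOp F (graphDensitySq F) p ≤ -(3 / (2 * graphDensitySq F p)) *
      (spaceGrad (graphDensitySq F) p ⬝ᵥ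
        graphInvMetric (spaceGrad F p) *ᵥ spaceGrad (graphDensitySq F) p) := by
  have hF₂ : ContDiffAt ℝ 2 F p := hF.of_le (by norm_num)
  have hQ : 0 < graphDensitySq F p := graphDensitySq_pos
  have hS : (spaceHess F p * graphInvMetric (spaceGrad F p) * spaceHess F p).PosSemidef := by
    have h := (posSemidef_graphInvMetric (spaceGrad F p)).conjTranspose_mul_mul_same (spaceHess F p)
    rwa [Matrix.conjTranspose_eq_transpose_of_trivial, (isSymm_spaceHess hF₂).eq] at h
  have hgrad : spaceGrad (graphDensitySq F) p ⬝ᵥ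
      graphInvMetric (spaceGrad F p) *ᵥ spaceGrad (graphDensitySq F) p =
        4 * (spaceGrad F p ⬝ᵥ
          (spaceHess F p * graphInvMetric (spaceGrad F p) * spaceHess F p) *ᵥ spaceGrad F p) := by
    rw [spaceGrad_graphDensitySq hF₂, Matrix.mulVec_smul, smul_dotProduct, dotProduct_smul,
      Matrix.mul_assoc, ← Matrix.mulVec_mulVec, ← Matrix.mulVec_mulVec,
      Matrix.dotProduct_mulVec (spaceGrad F p), ← Matrix.mulVec_transpose,
      (isSymm_spaceHess hF₂).eq]
    simp only [smul_eq_mul]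
    ring
  have htrace := dotProduct_mulVec_le_trace_mul hS (spaceGrad F p)
  rw [graphHeatOp_graphDensitySq hF heq, hgrad]
  set S := spaceHess F p * graphInvMetric (spaceGrad F p) * spaceHess F p
  have hdiv : (spaceGrad F p ⬝ᵥ S *ᵥ spaceGrad F p) / graphDensitySq F p ≤ S.trace := by
    rw [div_le_iff₀ hQ, graphDensitySq, mul_add, mul_one]
    linarith [hS.trace_nonneg]
  have hring : -(3 / (2 * graphDensitySq F p)) * (4 * (spaceGrad F p ⬝ᵥ S *ᵥ spaceGrad F p)) =
      -(6 * ((spaceGrad F p ⬝ᵥ S *ᵥ spaceGrad F p) / graphDensitySq F p)) := by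
    field_simp
    ring
  rw [hring, neg_mul, div_mul_eq_mul_div, mul_div_assoc]
  linarith

/-- The angle function `1 / √(1 + |DF|²)`, i.e. the component of the upward unit normal of the graph
in the vertical direction. -/
noncomputable def angleFunction (F : SpaceTime n → ℝ) (p : SpaceTime n) : ℝ :=
  (√(graphDensitySq F p))⁻¹

theorem angleFunction_eq_rpow_comp (F : SpaceTime n → ℝ) :
    angleFunction F = (fun s : ℝ => s ^ (-1 / 2 : ℝ)) ∘ graphDensitySq F := by
  funext q
  rw [angleFunction, Real.sqrt_eq_rpow, ← Real.rpow_neg graphDensitySq_pos.le, Function.comp_apply]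
  norm_num

theorem contDiffAt_angleFunction {k m : WithTop ℕ∞} (hF : ContDiffAt ℝ k F p) (hk : m + 1 ≤ k) :
    ContDiffAt ℝ m (angleFunction F) p := by
  rw [angleFunction_eq_rpow_comp]
  exact (contDiffAt_graphDensitySq hF hk).rpow_const_of_ne graphDensitySq_pos.ne'

theorem graphHeatOp_angleFunction_nonneg (hF : ContDiffAt ℝ 3 F p)
    (heq : ∀ᶠ q in 𝓝 p, graphHeatOp F F q = 0) : 0 ≤ graphHeatOp F (angleFunction F) p := by
  have hQ : 0 < graphDensitySq F p := graphDensitySq_pos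
  have hψ (s : ℝ) (hs : 0 < s) (r : ℝ) : HasDerivAt (fun s : ℝ => s ^ r) (r * s ^ (r - 1)) s :=
    Real.hasDerivAt_rpow_const (Or.inl hs.ne')
  have hpow : graphDensitySq F p ^ (-1 / 2 - 1 : ℝ) =
      graphDensitySq F p ^ (-1 / 2 - 1 - 1 : ℝ) * graphDensitySq F p := by
    rw [← Real.rpow_add_one hQ.ne', sub_add_cancel]
  have hle := mul_le_mul_of_nonneg_left (graphHeatOp_graphDensitySq_le hF heq)
    (Real.rpow_nonneg hQ.le (-1 / 2 - 1))
  rw [graphHeatOp, angleFunction_eq_rpow_comp]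
  refine le_of_le_of_eq ?_ (parabolicOp_comp (contDiffAt_graphDensitySq (m := 2) hF le_rfl)
    ((lt_mem_nhds hQ).mono fun s hs => hψ s hs (-1 / 2))
    ((hψ _ hQ (-1 / 2 - 1)).const_mul (-1 / 2))).symm
  have hring (e : ℝ) :
      graphDensitySq F p ^ (-1 / 2 - 1 : ℝ) * (-(3 / (2 * graphDensitySq F p)) * e) =
        -3 / 2 * graphDensitySq F p ^ (-1 / 2 - 1 - 1 : ℝ) * e := by
    rw [hpow]
    field_simp
  rw [hring] at hle
  rw [← graphHeatOp]
  linarith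

theorem parabolicOp_norm_sub_sq (a : Matrix (Fin n) (Fin n) ℝ) (x₀ : EuclideanSpace ℝ (Fin n)) :
    parabolicOp a (fun q => ‖q.2 - x₀‖ ^ 2) p = -2 * a.trace := by
  have hcoord (i : Fin n) := parabolicOp_sub_const_sq (a := a) (p := p)
    ((EuclideanSpace.proj i ∘L .snd ℝ ℝ (EuclideanSpace ℝ (Fin n))).contDiff.contDiffAt) (x₀ i)
  have hsum : (fun q : SpaceTime n => ‖q.2 - x₀‖ ^ 2) = fun q =>
      ∑ i, ((EuclideanSpace.proj i ∘L .snd ℝ ℝ (EuclideanSpace ℝ (Fin n))) q - x₀ i) ^ 2 := by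
    funext q
    simp [EuclideanSpace.norm_sq_eq]
  have hgrad (i : Fin n) : spaceGrad
      (EuclideanSpace.proj (𝕜 := ℝ) i ∘L .snd ℝ ℝ (EuclideanSpace ℝ (Fin n))) p =
        Pi.single i 1 := by
    ext j
    rw [spaceGrad, dirDeriv, ContinuousLinearMap.fderiv]
    simp [spaceDir, Pi.single_apply, eq_comm]
  rw [hsum, parabolicOp_sum _ fun i _ => by fun_prop]
  simp only [hcoord, hgrad, parabolicOp_continuousLinearMap]
  simp [timeDir, Matrix.trace, Finset.mul_sum]

theorem graphHeatOp_norm_sub_sq_add_sq (hF : ContDiffAt ℝ 2 F p) (heq : graphHeatOp F F p = 0)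
    (x₀ : EuclideanSpace ℝ (Fin n)) (h t₀ c : ℝ) :
    graphHeatOp F (fun q => ‖q.2 - x₀‖ ^ 2 + (F q - h) ^ 2 + c * (q.1 - t₀)) p = c - 2 * n := by
  have hnorm : ContDiffAt ℝ 2 (fun q : SpaceTime n => ‖q.2 - x₀‖ ^ 2) p :=
    (contDiffAt_snd.sub contDiffAt_const).norm_sq ℝ
  have htime : parabolicOp (graphInvMetric (spaceGrad F p)) (fun q => q.1 - t₀) p = 1 :=
    (parabolicOp_sub_const contDiffAt_fst t₀).trans
      (parabolicOp_continuousLinearMap (.fst ℝ ℝ (EuclideanSpace ℝ (Fin n))))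
  have hsq : ContDiffAt ℝ 2 (fun q => (F q - h) ^ 2) p := (hF.sub contDiffAt_const).pow 2
  rw [graphHeatOp] at heq
  have htrace := trace_graphInvMetric_add (spaceGrad F p)
  rw [graphHeatOp, parabolicOp_add (hnorm.add hsq) (by fun_prop), parabolicOp_add hnorm hsq,
    parabolicOp_norm_sub_sq, parabolicOp_sub_const_sq hF, parabolicOp_const_mul (by fun_prop),
    htime, heq]
  linarith

end AngleFunction

section GraphicalMCF

variable {n : ℕ} {I : Set ℝ} {U : Set (EuclideanSpace ℝ (Fin n))}
  {t t₀ T : ℝ} {x x₀ : EuclideanSpace ℝ (Fin n)} {p : SpaceTime n}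

theorem pd_slice {u : SpaceTime n → ℝ} {u' : SpaceTime n →L[ℝ] ℝ}
    (hu : HasFDerivWithinAt u u' (I ×ˢ U) (t, x)) (ht : t ∈ I) (hU : U ∈ 𝓝 x) (i : Fin n) :
    pd (fun y => u (t, y)) x i = u' (spaceDir i) := by
  have hslice : HasFDerivAt (fun y => u (t, y)) (u' ∘L .inr ℝ ℝ (EuclideanSpace ℝ (Fin n))) x :=
    (hu.comp x (hasFDerivAt_prodMk_right t x).hasFDerivWithinAt
      fun y hy => ⟨ht, hy⟩).hasFDerivAt hU
  rw [pd, hslice.fderiv]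
  rfl

theorem pd_slice_eq_spaceGrad {u : SpaceTime n → ℝ} (hu : DifferentiableAt ℝ u (t, x)) :
    pd (fun y => u (t, y)) x = spaceGrad u (t, x) :=
  funext <| pd_slice hu.hasFDerivAt.hasFDerivWithinAt (mem_univ t) univ_mem

theorem pd2_slice_eq_spaceHess {u : SpaceTime n → ℝ} (hu : ContDiffAt ℝ 2 u (t, x)) (i j : Fin n) :
    pd2 (fun y => u (t, y)) x i j = spaceHess u (t, x) i j := by
  have hpd : (fun y => pd (fun y => u (t, y)) y j) =ᶠ[𝓝 x]
      fun y => dirDeriv (spaceDir j) u (t, y) := by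
    have hnear : ∀ᶠ y in 𝓝 x, ContDiffAt ℝ 2 u (t, y) :=
      (Continuous.prodMk_right t).continuousAt.eventually (hu.eventually (by simp))
    filter_upwards [hnear] with y hy
    exact congrFun (pd_slice_eq_spaceGrad (hy.differentiableAt two_ne_zero)) j
  rw [pd2, hpd.fderiv_eq]
  exact congrFun (pd_slice_eq_spaceGrad
    ((contDiffAt_dirDeriv (m := 1) hu le_rfl _).differentiableAt one_ne_zero)) i

theorem deriv_slice_eq_dirDeriv {u : SpaceTime n → ℝ} (hu : DifferentiableAt ℝ u (t, x)) :
    deriv (fun s => u (s, x)) t = dirDeriv timeDir u (t, x) :=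
  (hu.hasFDerivAt.comp_hasDerivAt t ((hasDerivAt_id t).prodMk (hasDerivAt_const t x))).deriv

theorem one_add_gradNormSq_slice {u : SpaceTime n → ℝ} (hu : DifferentiableAt ℝ u (t, x)) :
    1 + gradNormSq (fun y => u (t, y)) x = graphDensitySq u (t, x) := by
  simp only [gradNormSq, pd_slice_eq_spaceGrad hu, graphDensitySq, dotProduct, sq]

theorem mcfRHS_slice {u : SpaceTime n → ℝ} (hu : ContDiffAt ℝ 2 u (t, x)) :
    mcfRHS (fun y => u (t, y)) x =
      (graphInvMetric (spaceGrad u (t, x)) * spaceHess u (t, x)).trace := by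
  have hdu := hu.differentiableAt two_ne_zero
  simp only [mcfRHS, one_add_gradNormSq_slice hdu, pd_slice_eq_spaceGrad hdu,
    pd2_slice_eq_spaceHess hu, Matrix.trace, Matrix.diag, Matrix.mul_apply, graphInvMetric_apply,
    graphDensitySq, (isSymm_spaceHess hu).apply]

namespace IsGMCF

variable {f : ℝ → EuclideanSpace ℝ (Fin n) → ℝ}

theorem contDiffAt (hf : IsGMCF I U f) (hp : I ×ˢ U ∈ 𝓝 p) {k : ℕ} :
    ContDiffAt ℝ k (Function.uncurry f) p :=
  (hf.1.contDiffAt hp).of_le (mod_cast le_top)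

theorem graphHeatOp_eq_zero (hf : IsGMCF I U f) (hp : I ×ˢ U ∈ 𝓝 p) :
    graphHeatOp (Function.uncurry f) (Function.uncurry f) p = 0 := by
  obtain ⟨t, x⟩ := p
  have hF : ContDiffAt ℝ 2 (Function.uncurry f) (t, x) := hf.contDiffAt hp
  obtain ⟨ht, hx⟩ := mem_of_mem_nhds hp
  rw [graphHeatOp, parabolicOp, ← mcfRHS_slice hF,
    ← deriv_slice_eq_dirDeriv (hF.differentiableAt two_ne_zero)]
  exact sub_eq_zero.2 (hf.2 t ht x hx)

theorem continuousOn_gradNormSq (hf : IsGMCF I U f) (hI : UniqueDiffOn ℝ I) (hU : IsOpen U) :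
    ContinuousOn (fun p : SpaceTime n => gradNormSq (f p.1) p.2) (I ×ˢ U) := by
  have hpd (i : Fin n) : ContinuousOn (fun p : SpaceTime n => pd (f p.1) p.2 i) (I ×ˢ U) := by
    refine ((hf.1.continuousOn_fderivWithin (hI.prod hU.uniqueDiffOn) (by simp)).clm_apply
      (continuousOn_const (c := spaceDir i))).congr fun p hp => ?_
    exact pd_slice (hf.1.differentiableOn (by simp) p hp).hasFDerivWithinAt hp.1
      (hU.mem_nhds hp.2) i
  exact continuousOn_finsetSum _ fun i _ => (hpd i).pow 2

end IsGMCF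

theorem one_add_gradNormSq_pos (g : EuclideanSpace ℝ (Fin n) → ℝ) (x : EuclideanSpace ℝ (Fin n)) :
    0 < 1 + gradNormSq g x :=
  one_add_dotProduct_self_pos (pd g x) |>.trans_eq <| by simp only [gradNormSq, dotProduct, sq]

/-- The comparison function `|X - X₀|² + c (t - t₀) + κ / √(1 + |Df|²)`, where `X = (x, f(t, x))` is
the position on the graph and `X₀ = (x₀, h)` is a fixed point of `ℝⁿ⁺¹`. -/
noncomputable def barrier (f : ℝ → EuclideanSpace ℝ (Fin n) → ℝ) (x₀ : EuclideanSpace ℝ (Fin n))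
    (h t₀ c κ : ℝ) (q : SpaceTime n) : ℝ :=
  ‖q.2 - x₀‖ ^ 2 + (f q.1 q.2 - h) ^ 2 + c * (q.1 - t₀) + κ * (√(1 + gradNormSq (f q.1) q.2))⁻¹

namespace IsGMCF

variable {f : ℝ → EuclideanSpace ℝ (Fin n) → ℝ} {R c h κ : ℝ}

theorem barrier_eventuallyEq (hf : IsGMCF I U f) (hp : I ×ˢ U ∈ 𝓝 p) :
    barrier f x₀ h t₀ c κ =ᶠ[𝓝 p] fun q =>
      ‖q.2 - x₀‖ ^ 2 + (Function.uncurry f q - h) ^ 2 + c * (q.1 - t₀) +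
        κ * angleFunction (Function.uncurry f) q := by
  filter_upwards [eventually_mem_nhds_iff.2 hp] with q hq
  have hF : DifferentiableAt ℝ (Function.uncurry f) q :=
    (hf.contDiffAt (k := 1) hq).differentiableAt one_ne_zero
  rw [angleFunction, ← one_add_gradNormSq_slice hF]
  rfl

theorem contDiffAt_norm_sub_sq_add_sq (hf : IsGMCF I U f) (hp : I ×ˢ U ∈ 𝓝 p) :
    ContDiffAt ℝ 2 (fun q : SpaceTime n =>
      ‖q.2 - x₀‖ ^ 2 + (Function.uncurry f q - h) ^ 2 + c * (q.1 - t₀)) p :=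
  (((contDiffAt_snd.sub contDiffAt_const).norm_sq ℝ).add
    (((hf.contDiffAt hp).sub contDiffAt_const).pow 2)).add (by fun_prop)

theorem contDiffAt_barrier (hf : IsGMCF I U f) (hp : I ×ˢ U ∈ 𝓝 p) :
    ContDiffAt ℝ 2 (barrier f x₀ h t₀ c κ) p :=
  ((hf.contDiffAt_norm_sub_sq_add_sq hp).add (contDiffAt_const.mul
    (contDiffAt_angleFunction (hf.contDiffAt (k := 3) hp) le_rfl))).congr_of_eventuallyEq
      (hf.barrier_eventuallyEq hp)

theorem graphHeatOp_barrier_pos (hf : IsGMCF I U f) (hp : I ×ˢ U ∈ 𝓝 p) (hκ : 0 ≤ κ)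
    (hc : 2 * n < c) :
    0 < graphHeatOp (Function.uncurry f) (barrier f x₀ h t₀ c κ) p := by
  have hF : ContDiffAt ℝ 3 (Function.uncurry f) p := hf.contDiffAt hp
  have heq : ∀ᶠ q in 𝓝 p, graphHeatOp (Function.uncurry f) (Function.uncurry f) q = 0 :=
    (eventually_mem_nhds_iff.2 hp).mono fun q hq => hf.graphHeatOp_eq_zero hq
  have hangle := contDiffAt_angleFunction (m := 2) hF le_rfl
  rw [graphHeatOp, parabolicOp_congr (hf.barrier_eventuallyEq hp),
    parabolicOp_add (hf.contDiffAt_norm_sub_sq_add_sq hp) (contDiffAt_const.mul hangle),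
    parabolicOp_const_mul hangle, ← graphHeatOp, ← graphHeatOp,
    graphHeatOp_norm_sub_sq_add_sq (hf.contDiffAt hp) heq.self_of_nhds]
  have := mul_nonneg hκ (graphHeatOp_angleFunction_nonneg hF heq)
  linarith

theorem continuousOn_barrier (hf : IsGMCF I U f) (hI : UniqueDiffOn ℝ I) (hU : IsOpen U) :
    ContinuousOn (barrier f x₀ h t₀ c κ) (I ×ˢ U) := by
  have hsq : ContinuousOn (fun q : SpaceTime n => (f q.1 q.2 - h) ^ 2) (I ×ˢ U) :=
    (hf.1.continuousOn.sub continuousOn_const).pow 2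
  have hangle : ContinuousOn (fun q : SpaceTime n => (√(1 + gradNormSq (f q.1) q.2))⁻¹) (I ×ˢ U) :=
    (continuousOn_const.add (hf.continuousOn_gradNormSq hI hU)).sqrt.inv₀ fun q _ =>
      (Real.sqrt_pos.2 (one_add_gradNormSq_pos (f q.1) q.2)).ne'
  unfold barrier
  fun_prop

theorem sq_le_barrier (hf : IsGMCF (Ico t₀ T) U f) (hU : IsOpen U) (hκ : 0 ≤ κ) (hc : 2 * n < c)
    (hball : closedBall x₀ R ⊆ U)
    (hinit : ∀ y ∈ closedBall x₀ R, R ^ 2 ≤ barrier f x₀ h t₀ c κ (t₀, y))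
    (ht : t ∈ Ico t₀ T) (hx : x ∈ closedBall x₀ R) :
    R ^ 2 ≤ barrier f x₀ h t₀ c κ (t, x) := by
  have hsub : Icc t₀ t ×ˢ closedBall x₀ R ⊆ Ico t₀ T ×ˢ U :=
    prod_mono (Icc_subset_Ico_right ht.2) hball
  have hlateral (s : ℝ) (hs : s ∈ Icc t₀ t) (y) (hy : y ∈ frontier (closedBall x₀ R)) :
      R ^ 2 ≤ barrier f x₀ h t₀ c κ (s, y) := by
    have hyR : ‖y - x₀‖ = R := by
      rw [← dist_eq_norm]; exact frontier_closedBall_subset_sphere hy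
    have hc₀ : 0 ≤ c := (by positivity : (0 : ℝ) ≤ 2 * n).trans hc.le
    have hs₀ : 0 ≤ s - t₀ := sub_nonneg.2 hs.1
    rw [barrier, hyR, add_assoc, add_assoc]
    exact le_add_of_nonneg_right (by positivity)
  refine le_of_parabolicOp_pos (isCompact_closedBall x₀ R)
    ((hf.continuousOn_barrier (uniqueDiffOn_Ico t₀ T) hU).mono hsub) hinit hlateral ?_
    ⟨right_mem_Icc.2 ht.1, hx⟩
  rintro q ⟨hqt, hqx⟩
  have hq : Ico t₀ T ×ˢ U ∈ 𝓝 q := prod_mem_nhds (Ico_mem_nhds hqt.1 (hqt.2.trans_lt ht.2))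
    (hU.mem_nhds (hball (interior_subset hqx)))
  exact ⟨hf.contDiffAt_barrier hq, _, posSemidef_graphInvMetric _,
    hf.graphHeatOp_barrier_pos hq hκ hc⟩

theorem abs_le_add_radius {M : ℝ} (hf : IsGMCF (Ico t₀ T) U f) (hU : IsOpen U) (hR : 0 ≤ R)
    (hball : closedBall x₀ R ⊆ U) (hM : ∀ y ∈ closedBall x₀ R, |f t₀ y| ≤ M) (ht : t ∈ Ioo t₀ T)
    (hRt : 2 * n * (t - t₀) < R ^ 2) : |f t x₀| ≤ M + R := by
  by_contra! hlarge
  have hx₀ : x₀ ∈ closedBall x₀ R := mem_closedBall_self hR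
  have hcont : ContinuousOn (fun s => |f s x₀|) (Icc t₀ t) :=
    (hf.1.continuousOn.comp (Continuous.prodMk_left x₀).continuousOn fun s hs =>
      ⟨Icc_subset_Ico_right ht.2 hs, hball hx₀⟩).abs
  -- On the way the height passes through `±(M + R)`, where a sphere of radius `R` lies clear of the
  -- initial graph; in time `t - t₀` this sphere cannot shrink to its centre.
  obtain ⟨s, hs, hsR⟩ : M + R ∈ (fun s => |f s x₀|) '' Icc t₀ t :=
    intermediate_value_Icc ht.1.le hcont ⟨(hM x₀ hx₀).trans (le_add_of_nonneg_right hR), hlarge.le⟩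
  obtain ⟨c, hc, hcR⟩ := exists_between ((lt_div_iff₀ (sub_pos.2 ht.1)).2 hRt)
  have hinit (y) (hy : y ∈ closedBall x₀ R) :
      R ^ 2 ≤ barrier f x₀ (f s x₀) t₀ c 0 (t₀, y) := by
    have hgap : R ≤ |f t₀ y - f s x₀| := by
      have := abs_sub_abs_le_abs_sub (f s x₀) (f t₀ y)
      rw [abs_sub_comm] at this
      linarith [hM y hy]
    simpa [barrier] using (pow_le_pow_left₀ hR hgap 2).trans
      ((sq_abs _).trans_le (le_add_of_nonneg_left (sq_nonneg ‖y - x₀‖)))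
  have hbarrier := hf.sq_le_barrier hU le_rfl hc hball hinit ⟨hs.1, hs.2.trans_lt ht.2⟩ hx₀
  have hcs : c * (s - t₀) ≤ c * (t - t₀) := mul_le_mul_of_nonneg_left (by linarith [hs.2])
    ((by positivity : (0 : ℝ) ≤ 2 * n).trans hc.le)
  rw [lt_div_iff₀ (sub_pos.2 ht.1)] at hcR
  simp only [barrier, sub_self, norm_zero] at hbarrier
  linarith

theorem sq_sub_mul_sqrt_le {v₀ : ℝ} (hf : IsGMCF (Ico t₀ T) U f) (hU : IsOpen U) (hR : 0 ≤ R)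
    (hball : closedBall x₀ R ⊆ U) (hv₀ : ∀ y ∈ closedBall x₀ R, √(1 + gradNormSq (f t₀) y) ≤ v₀)
    (hc : 2 * n < c) (ht : t ∈ Ico t₀ T) :
    (R ^ 2 - c * (t - t₀)) * √(1 + gradNormSq (f t) x₀) ≤ R ^ 2 * v₀ := by
  have hpos (s : ℝ) (y : EuclideanSpace ℝ (Fin n)) : 0 < √(1 + gradNormSq (f s) y) :=
    Real.sqrt_pos.2 (one_add_gradNormSq_pos (f s) y)
  have hx₀ : x₀ ∈ closedBall x₀ R := mem_closedBall_self hR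
  have hv₀_nonneg : 0 ≤ v₀ := (hpos t₀ x₀).le.trans (hv₀ x₀ hx₀)
  have hinit (y) (hy : y ∈ closedBall x₀ R) :
      R ^ 2 ≤ barrier f x₀ (f t x₀) t₀ c (R ^ 2 * v₀) (t₀, y) := by
    have hratio : R ^ 2 ≤ R ^ 2 * v₀ * (√(1 + gradNormSq (f t₀) y))⁻¹ := by
      rw [← div_eq_mul_inv, le_div_iff₀ (hpos t₀ y)]
      exact mul_le_mul_of_nonneg_left (hv₀ y hy) (sq_nonneg R)
    rw [barrier, sub_self, mul_zero, add_zero]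
    exact hratio.trans (le_add_of_nonneg_left (by positivity))
  have hbarrier := hf.sq_le_barrier hU (by positivity) hc hball hinit ht hx₀
  rw [← le_div_iff₀ (hpos t x₀), div_eq_mul_inv]
  simp only [barrier, sub_self, norm_zero] at hbarrier
  linarith

end IsGMCF

theorem stayinggraphicalthm_general {Λ L M : ℝ} {f : ℝ → EuclideanSpace ℝ (Fin n) → ℝ}
    (hΛ : 0 ≤ Λ) (hΛn : 4 * n < Λ ^ 2) (hL : 1 / 2 ≤ L) (hf : IsGMCF (Ico t₀ T) U f)
    (hU : IsOpen U) (ht : t ∈ Ioo t₀ T) (hball : closedBall x (Λ * √(t - t₀)) ⊆ U)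
    (hM : ∀ y ∈ closedBall x (Λ * √(t - t₀)), |f t₀ y| ≤ M)
    (hgrad : ∀ y ∈ closedBall x (Λ * √(t - t₀)), gradNorm (f t₀) y ≤ L) :
    |f t x| ≤ M + Λ * √(t - t₀) ∧ gradNorm (f t) x ≤ 4 * L := by
  have hτ : 0 < t - t₀ := sub_pos.2 ht.1
  have hR : 0 ≤ Λ * √(t - t₀) := by positivity
  have hRsq : (Λ * √(t - t₀)) ^ 2 = Λ ^ 2 * (t - t₀) := by rw [mul_pow, Real.sq_sqrt hτ.le]
  have hv₀ (y) (hy : y ∈ closedBall x (Λ * √(t - t₀))) :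
      √(1 + gradNormSq (f t₀) y) ≤ √(1 + L ^ 2) :=
    Real.sqrt_le_sqrt <| by linarith [(Real.sqrt_le_left (by linarith)).1 (hgrad y hy)]
  have hv := hf.sq_sub_mul_sqrt_le (c := Λ ^ 2 / 2) hU hR hball hv₀ (by linarith) ⟨ht.1.le, ht.2⟩
  have hv_le : √(1 + gradNormSq (f t) x) ≤ 2 * √(1 + L ^ 2) := by
    have hpos : 0 < Λ ^ 2 * (t - t₀) :=
      mul_pos ((by positivity : (0 : ℝ) ≤ 4 * n).trans_lt hΛn) hτ
    rw [hRsq] at hv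
    refine le_of_mul_le_mul_left ?_ hpos
    linarith
  have hdensity : 1 + gradNormSq (f t) x ≤ 4 * (1 + L ^ 2) := by
    rw [Real.sqrt_le_left (by positivity), mul_pow, Real.sq_sqrt (by positivity)] at hv_le
    linarith
  refine ⟨hf.abs_le_add_radius hU hR hball hM ht ?_, (Real.sqrt_le_left (by linarith)).2 ?_⟩
  · rw [hRsq]
    exact mul_lt_mul_of_pos_right (by linarith [n.cast_nonneg (α := ℝ)]) hτ
  · nlinarith

end GraphicalMCF

end

/-- **Staying graphical** (graphical case of Theorem `stayinggraphicalthm`).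
For every `L ≥ 1` there is `Λ > 1` such that: if `f` is a graphical mean curvature flow on
`[t₀,t₀+τ) × Bⁿ(a₀,ρ)` with `|f| < Γ`, `sup |f(t₀,·)| ≤ Γ − 2δρ` and `sup |Df(t₀,·)| ≤ L`,
then for every `t ∈ (t₀,t₀+τ)` with `Λ√(t−t₀) < δρ` and every
`x ∈ Bⁿ(a₀, ρ − Λ√(t−t₀))` one has `|f(t,x)| ≤ sup |f(t₀,·)| + Λ√(t−t₀)` and
`|Df(t,x)| ≤ 4L`. -/
theorem stayinggraphicalthm (n : ℕ) (hn : 1 ≤ n) (L : ℝ) (hL : 1 ≤ L) :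
    ∃ Λ : ℝ, 1 < Λ ∧
      ∀ (ρ Γ τ : ℝ), 0 < ρ → 0 < Γ → 0 < τ →
      ∀ δ ∈ Set.Ioc (0 : ℝ) 1, ∀ (t₀ : ℝ) (a₀ : EuclideanSpace ℝ (Fin n))
        (f : ℝ → EuclideanSpace ℝ (Fin n) → ℝ),
        IsGMCF (Set.Ico t₀ (t₀ + τ)) (Metric.ball a₀ ρ) f →
        (∀ t ∈ Set.Ico t₀ (t₀ + τ), ∀ x ∈ Metric.ball a₀ ρ, |f t x| < Γ) →
        (∀ x ∈ Metric.ball a₀ ρ, |f t₀ x| ≤ Γ - 2 * δ * ρ) →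
        (∀ x ∈ Metric.ball a₀ ρ, gradNorm (f t₀) x ≤ L) →
        ∀ t ∈ Set.Ioo t₀ (t₀ + τ), Λ * Real.sqrt (t - t₀) < δ * ρ →
        ∀ x ∈ Metric.ball a₀ (ρ - Λ * Real.sqrt (t - t₀)),
          |f t x| ≤ sSup ((fun y => |f t₀ y|) '' Metric.ball a₀ ρ) + Λ * Real.sqrt (t - t₀) ∧
          gradNorm (f t) x ≤ 4 * L := by
  have hn' : (1 : ℝ) ≤ n := mod_cast hn
  refine ⟨2 * n + 1, by linarith, ?_⟩
  intro ρ Γ τ _ _ _ δ _ t₀ a₀ f hf _ hheight hgrad t ht _ x hx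
  have hball : closedBall x ((2 * n + 1) * √(t - t₀)) ⊆ ball a₀ ρ :=
    closedBall_subset_ball' (by linarith [mem_ball.1 hx])
  have hbdd : BddAbove ((fun y => |f t₀ y|) '' ball a₀ ρ) :=
    ⟨Γ - 2 * δ * ρ, forall_mem_image.2 hheight⟩
  exact stayinggraphicalthm_general (by positivity) (by nlinarith) (by linarith) hf isOpen_ball ht
    hball (fun y hy => le_csSup hbdd (mem_image_of_mem _ (hball hy)))
    fun y hy => hgrad y (hball hy)
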